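/- For all integers n ≥ 3 and k ≥ n, ||R_{k,n} − C_{k,n}|| ≥ 0.24·(n−1)/k + (n+1)·B_n/k^{n−1}. -/

import Mathlib

/-- Number of descents of a permutation of `{1,...,n}` (here `Fin n`, 0-indexed):
the number of positions `i` with `1 ≤ i ≤ n-1` and `π(i) > π(i+1)`. -/
def numDescents (n : ℕ) (π : Equiv.Perm (Fin n)) : ℕ :=
  ((Finset.range (n - 1)).filter (fun i =>
    ∃ h : i + 1 < n, π ⟨i + 1, h⟩ < π ⟨i, Nat.lt_of_succ_lt h⟩)).card

/-- `π` has a cyclic descent at `n` if `π(n) > π(1)`. -/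
def hasCyclicDescentAtLast (n : ℕ) (π : Equiv.Perm (Fin n)) : Prop :=
  ∃ h : 0 < n, π ⟨0, h⟩ < π ⟨n - 1, Nat.sub_lt h Nat.one_pos⟩

instance (n : ℕ) (π : Equiv.Perm (Fin n)) : Decidable (hasCyclicDescentAtLast n π) :=
  exists_prop_decidable _

/-- Number of cyclic descents: `d(π)+1` if `π` has a cyclic descent at `n`, else `d(π)`. -/
def numCyclicDescents (n : ℕ) (π : Equiv.Perm (Fin n)) : ℕ :=
  numDescents n π + if hasCyclicDescentAtLast n π then 1 else 0

/-- The k-riffle shuffle measure `R_{k,n}(π) = binom(n+k-d(π)-1, n) / k^n`. -/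
noncomputable def riffle (k n : ℕ) (π : Equiv.Perm (Fin n)) : ℝ :=
  (Nat.choose (n + k - numDescents n π - 1) n : ℝ) / (k : ℝ) ^ n

/-- The cut-then-k-riffle-shuffle measure
`C_{k,n}(π) = binom(n+k-cd(π)-1, n-1) / (n·k^(n-1))`. -/
noncomputable def cutRiffle (k n : ℕ) (π : Equiv.Perm (Fin n)) : ℝ :=
  (Nat.choose (n + k - numCyclicDescents n π - 1) (n - 1) : ℝ) / ((n : ℝ) * (k : ℝ) ^ (n - 1))


theorem numDescents_eq (m : ℕ) (π : Equiv.Perm (Fin (m+1))) :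
    numDescents (m+1) π = ∑ i : Fin m, if π i.succ < π i.castSucc then 1 else 0 := by
  unfold numDescents
  rw [Finset.card_filter]
  simp only [Nat.add_sub_cancel]
  rw [Finset.sum_range]
  refine Finset.sum_congr rfl fun i _ => ?_
  have h : (i:ℕ) + 1 < m + 1 := by omega
  have : (∃ h : (i:ℕ) + 1 < m+1, π ⟨i + 1, h⟩ < π ⟨i, Nat.lt_of_succ_lt h⟩) ↔
      π i.succ < π i.castSucc := ⟨fun ⟨_, h⟩ => h, fun h' => ⟨h, h'⟩⟩
  simp only [this]

theorem hasCyc_iff (m : ℕ) (π : Equiv.Perm (Fin (m+1))) :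
    hasCyclicDescentAtLast (m+1) π ↔ π (Fin.last m + 1) < π (Fin.last m) := by
  have e : (Fin.last m + 1 : Fin (m+1)) = 0 := by simp
  rw [e]
  exact ⟨fun ⟨_, h⟩ => h, fun h => ⟨Nat.succ_pos _, h⟩⟩

theorem ncd_eq (m : ℕ) (π : Equiv.Perm (Fin (m+1))) :
    numCyclicDescents (m+1) π
      = (Finset.univ.filter (fun i : Fin (m+1) => π (i+1) < π i)).card := by
  unfold numCyclicDescents
  rw [numDescents_eq, Finset.card_filter, Fin.sum_univ_castSucc]
  congr 1
  · refine Finset.sum_congr rfl fun i _ => ?_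
    rw [Fin.coeSucc_eq_succ]
  · simp only [hasCyc_iff]

/-- prepend the minimum, then rotate -/
def rotExt (m : ℕ) (x : Fin (m+1) × Equiv.Perm (Fin m)) : Equiv.Perm (Fin (m+1)) :=
  Equiv.Perm.decomposeFin.symm (0, x.2) * Equiv.addRight x.1

theorem rotExt_apply (m : ℕ) (r : Fin (m+1)) (σ : Equiv.Perm (Fin m)) (i : Fin (m+1)) :
    rotExt m (r, σ) i = Equiv.Perm.decomposeFin.symm (0, σ) (i + r) := rfl

theorem rotExt_bij (m : ℕ) : Function.Bijective (rotExt m) := by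
  rw [Fintype.bijective_iff_injective_and_card]
  constructor
  · rintro ⟨r, σ⟩ ⟨s, τ⟩ h
    have h1 : rotExt m (r, σ) (-r) = 0 := by
      rw [rotExt_apply]; simp
    have h2 : rotExt m (s, τ) (-s) = 0 := by
      rw [rotExt_apply]; simp
    rw [← h] at h2
    have h3 := (rotExt m (r, σ)).injective (h1.trans h2.symm)
    have h4 : r = s := neg_injective h3
    subst h4
    have h5 : Equiv.Perm.decomposeFin.symm (0, σ) = Equiv.Perm.decomposeFin.symm (0, τ) :=
      mul_right_cancel h
    have := Equiv.Perm.decomposeFin.symm.injective h5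
    simpa using this
  · exact (Fintype.card_congr Equiv.Perm.decomposeFin).symm

theorem ncd_ext (p : ℕ) (σ : Equiv.Perm (Fin (p+1))) :
    numCyclicDescents (p+2) (Equiv.Perm.decomposeFin.symm (0, σ)) = numDescents (p+1) σ + 1 := by
  unfold numCyclicDescents
  congr 1
  · rw [numDescents_eq, numDescents_eq, Fin.sum_univ_succ]
    have : ∀ i : Fin p, (Fin.succ i).castSucc = (i.castSucc).succ := fun i => rfl
    simp [this, -Fin.castSucc_succ]

theorem ncd_rot (m : ℕ) (r : Fin (m+1)) (σ : Equiv.Perm (Fin m)) :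
    numCyclicDescents (m+1) (rotExt m (r, σ))
      = numCyclicDescents (m+1) (Equiv.Perm.decomposeFin.symm (0, σ)) := by
  rw [ncd_eq, ncd_eq]
  refine Finset.card_bij (fun i _ => i + r) ?_ ?_ ?_
  · intro i hi
    have hi' := (Finset.mem_filter.mp hi).2
    rw [rotExt_apply, rotExt_apply, add_right_comm] at hi'
    exact Finset.mem_filter.mpr ⟨Finset.mem_univ _, hi'⟩
  · intro a _ b _ h
    exact add_right_cancel h
  · intro b hb
    refine ⟨b - r, ?_, by simp⟩
    have hb' := (Finset.mem_filter.mp hb).2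
    refine Finset.mem_filter.mpr ⟨Finset.mem_univ _, ?_⟩
    rw [rotExt_apply, rotExt_apply, add_right_comm, sub_add_cancel]; exact hb'

theorem key_sum (p : ℕ) (f g : ℕ → ℝ) :
    ∑ π : Equiv.Perm (Fin (p+2)), (if hasCyclicDescentAtLast (p+2) π
        then f (numCyclicDescents (p+2) π) else g (numCyclicDescents (p+2) π))
      = ∑ σ : Equiv.Perm (Fin (p+1)),
        (((numDescents (p+1) σ : ℝ) + 1) * f (numDescents (p+1) σ + 1)
          + ((p:ℝ) + 1 - numDescents (p+1) σ) * g (numDescents (p+1) σ + 1)) := by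
  rw [← (rotExt_bij (p+1)).sum_comp, Fintype.sum_prod_type_right]
  refine Finset.sum_congr rfl fun σ _ => ?_
  simp only [ncd_rot, ncd_ext, hasCyc_iff, rotExt_apply]
  set π := Equiv.Perm.decomposeFin.symm (0, σ) with hπ
  have h1 : ∀ r : Fin (p+2), (Fin.last (p+1) + 1 + r) = (Fin.last (p+1) + r) + 1 :=
    fun r => by abel
  simp only [h1]
  have hcomp := Equiv.sum_comp (Equiv.addLeft (Fin.last (p+1)))
    (fun r => if π (r + 1) < π r then f (numDescents (p+1) σ + 1) else g (numDescents (p+1) σ + 1))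
  simp only [Equiv.coe_addLeft] at hcomp
  refine hcomp.trans ?_
  rw [Finset.sum_ite, Finset.sum_const, Finset.sum_const]
  have hc := ncd_eq (p+1) π
  rw [hπ, ncd_ext, ← hπ] at hc
  have hc2 := Finset.card_filter_add_card_filter_not (s := (Finset.univ : Finset (Fin (p+2))))
    (fun i => π (i+1) < π i)
  rw [← hc] at hc2 ⊢
  simp only [Finset.card_univ, Fintype.card_fin] at hc2
  have hc3 : (((Finset.univ.filter (fun i => ¬ π (i+1) < π i)).card : ℕ) : ℝ)
      = (p:ℝ) + 1 - numDescents (p+1) σ := by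
    have := congrArg (Nat.cast : ℕ → ℝ) hc2
    push_cast at this
    linarith
  rw [nsmul_eq_mul, nsmul_eq_mul, hc3]
  push_cast
  rfl

theorem nd_le (m : ℕ) (σ : Equiv.Perm (Fin (m+1))) : numDescents (m+1) σ ≤ m := by
  unfold numDescents
  refine (Finset.card_filter_le _ _).trans (by simp)

theorem succ_rel (a b : ℕ) : ((a:ℝ) + 1 - b) * (Nat.choose (a+1) b : ℝ) = (a + 1) * Nat.choose a b := by
  rcases le_or_gt b (a+1) with h | h
  · have := Nat.choose_mul_succ_eq a b
    have := congrArg (Nat.cast : ℕ → ℝ) this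
    push_cast [Nat.cast_sub h] at this
    linarith
  · rw [Nat.choose_eq_zero_of_lt h, Nat.choose_eq_zero_of_lt (by omega)]; simp

theorem worpitzky (p j : ℕ) :
    ∑ σ : Equiv.Perm (Fin (p+1)), (Nat.choose (j + p - numDescents (p+1) σ) (p+1) : ℝ)
      = (j:ℝ)^(p+1) := by
  induction p with
  | zero => simp [numDescents]
  | succ p ih =>
    have h := key_sum p (fun c => (Nat.choose (j + (p+1) - (c - 1)) (p+2) : ℝ))
      (fun c => (Nat.choose (j + (p+1) - c) (p+2) : ℝ))
    have e : ∀ π : Equiv.Perm (Fin (p+2)), (if hasCyclicDescentAtLast (p+2) π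
        then (Nat.choose (j + (p+1) - (numCyclicDescents (p+2) π - 1)) (p+2) : ℝ)
        else (Nat.choose (j + (p+1) - numCyclicDescents (p+2) π) (p+2) : ℝ)) =
        (Nat.choose (j + (p+1) - numDescents (p+2) π) (p+2) : ℝ) := by
      intro π
      unfold numCyclicDescents
      split_ifs <;> simp
    simp only [e] at h
    rw [show p + 1 + 1 = p + 2 from rfl, h, pow_succ, ← ih, Finset.sum_mul]
    refine Finset.sum_congr rfl fun σ _ => ?_
    have hd := nd_le p σ
    set d := numDescents (p+1) σ
    obtain ⟨a, ha⟩ : ∃ a, j + p - d = a := ⟨_, rfl⟩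
    have e1 : j + (p+1) - (d + 1 - 1) = a + 1 := by omega
    have e2 : j + (p+1) - (d + 1) = a := by omega
    have haR : (a:ℝ) = j + p - d := by
      rw [← ha, Nat.cast_sub (by omega)]; push_cast; ring
    rw [ha, e1, e2, Nat.choose_succ_succ a (p+1)]
    have h3 : ((a:ℝ) - (p+1)) * Nat.choose a (p+1) = (p+2) * Nat.choose a (p+2) := by
      have h4 := succ_rel a (p+2)
      rw [Nat.choose_succ_succ a (p+1)] at h4
      push_cast at h4
      push_cast
      have : p + 1 + 1 = p + 2 := rfl
      simp only [this, Nat.succ_eq_add_one] at h4 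
      linarith
    have hj : (j:ℝ) = a - p + d := by linarith
    rw [hj]
    push_cast
    have : (p+1).succ = p + 2 := rfl
    simp only [this, Nat.succ_eq_add_one] at *
    linear_combination (-1) * h3

theorem choose_rel (a p : ℕ) :
    ((a:ℝ) - (p+1)) * Nat.choose a (p+1) = (p+2) * Nat.choose a (p+2) := by
  have h4 := succ_rel a (p+2)
  rw [Nat.choose_succ_succ a (p+1)] at h4
  push_cast at h4
  have : (p+1).succ = p + 2 := rfl
  rw [this] at h4
  linarith

theorem W_rec (p d k : ℕ) (hd : d ≤ p) :
    ((k:ℝ) - d) * Nat.choose (k + 1 + p - d) (p+1)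
      = ((k:ℝ) + p + 1 - d) * Nat.choose (k + p - d) (p+1) := by
  have h := succ_rel (k + p - d) (p+1)
  have e : k + 1 + p - d = k + p - d + 1 := by omega
  rw [e]
  have : ((k + p - d : ℕ) : ℝ) = k + p - d := by
    rw [Nat.cast_sub (by omega)]; push_cast; ring
  rw [this] at h
  push_cast at h
  linear_combination h

theorem W_sum1 (p d k : ℕ) (hd : d ≤ p) :
    ((p:ℝ) + 2) * ∑ j ∈ Finset.range k, (Nat.choose (j + p - d) (p+1) : ℝ)
      = ((k:ℝ) - (d+1)) * Nat.choose (k + p - d) (p+1) := by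
  induction k with
  | zero => simp [Nat.choose_eq_zero_of_lt (show p - d < p + 1 by omega)]
  | succ k ih =>
    rw [Finset.sum_range_succ, mul_add, ih]
    have := W_rec p d k hd
    push_cast
    linear_combination -this

theorem W_sum2 (p d k : ℕ) (hd : d ≤ p) :
    ((p:ℝ) + 2) * ((p:ℝ) + 3) *
      ∑ j ∈ Finset.range k, ((k:ℝ) - j) * (Nat.choose (j + p - d) (p+1) : ℝ)
      = ((k:ℝ) - (d+1)) * ((k:ℝ) - (d+1) + (p + 2)) * Nat.choose (k + p - d) (p+1) := by
  induction k with
  | zero => simp [Nat.choose_eq_zero_of_lt (show p - d < p + 1 by omega)]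
  | succ k ih =>
    have h1 := W_sum1 p d (k+1) hd
    have h2 := W_rec p d k hd
    have e : ∑ j ∈ Finset.range (k+1), (((k+1:ℕ):ℝ) - j) * (Nat.choose (j + p - d) (p+1) : ℝ)
      = ∑ j ∈ Finset.range k, ((k:ℝ) - j) * (Nat.choose (j + p - d) (p+1) : ℝ)
        + ∑ j ∈ Finset.range (k+1), (Nat.choose (j + p - d) (p+1) : ℝ) := by
      have : ∑ j ∈ Finset.range k, ((k:ℝ) - j) * (Nat.choose (j + p - d) (p+1) : ℝ)
        = ∑ j ∈ Finset.range (k+1), ((k:ℝ) - j) * (Nat.choose (j + p - d) (p+1) : ℝ) := by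
        rw [Finset.sum_range_succ]; simp
      rw [this, ← Finset.sum_add_distrib]
      refine Finset.sum_congr rfl fun j _ => ?_
      push_cast; ring
    rw [e, mul_add, ih]
    push_cast at h1 ⊢
    linear_combination ((p:ℝ)+3) * h1 - ((k:ℝ) - (d+1)) * h2

theorem W_ident (p d k : ℕ) (hd : d ≤ p) :
    ((d:ℝ) + 1) * ((p:ℝ) + 1 - d) * Nat.choose (k + p - d) (p+1)
      = (((p:ℝ)+2) * k - (k:ℝ)^2) * Nat.choose (k + p - d) (p+1)
        + ∑ j ∈ Finset.range k, (2 * ((p:ℝ)+2) * j - ((p:ℝ)+2) * ((p:ℝ)+1) * ((k:ℝ) - j))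
          * Nat.choose (j + p - d) (p+1) := by
  have h1 := W_sum1 p d k hd
  have h2 := W_sum2 p d k hd
  have e : ∑ j ∈ Finset.range k, (2 * ((p:ℝ)+2) * j - ((p:ℝ)+2) * ((p:ℝ)+1) * ((k:ℝ) - j))
          * (Nat.choose (j + p - d) (p+1) : ℝ)
      = 2 * ((p:ℝ)+2) * k * ∑ j ∈ Finset.range k, (Nat.choose (j + p - d) (p+1) : ℝ)
        - ((p:ℝ)+2) * ((p:ℝ)+3) *
          ∑ j ∈ Finset.range k, ((k:ℝ) - j) * (Nat.choose (j + p - d) (p+1) : ℝ) := by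
    rw [Finset.mul_sum, Finset.mul_sum, ← Finset.sum_sub_distrib]
    refine Finset.sum_congr rfl fun j _ => ?_
    ring
  rw [e]
  linear_combination (-2 * (k:ℝ)) * h1 + h2

theorem F_sum (p k : ℕ) :
    ∑ σ : Equiv.Perm (Fin (p+1)), ((numDescents (p+1) σ : ℝ) + 1)
        * ((p:ℝ) + 1 - numDescents (p+1) σ)
        * Nat.choose (k + p - numDescents (p+1) σ) (p+1)
      = (((p:ℝ)+2) * k - (k:ℝ)^2) * (k:ℝ)^(p+1)
        + ∑ j ∈ Finset.range k, (2 * ((p:ℝ)+2) * j - ((p:ℝ)+2) * ((p:ℝ)+1) * ((k:ℝ) - j))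
          * (j:ℝ)^(p+1) := by
  rw [Finset.sum_congr rfl fun σ _ => W_ident p _ k (nd_le p σ), Finset.sum_add_distrib,
    ← Finset.mul_sum, worpitzky, Finset.sum_comm]
  congr 1
  refine Finset.sum_congr rfl fun j _ => ?_
  rw [← Finset.mul_sum, worpitzky]

theorem abs_diff (p k : ℕ) (hk : p + 2 ≤ k) (π : Equiv.Perm (Fin (p+2))) :
    |riffle k (p+2) π - cutRiffle k (p+2) π| =
      if hasCyclicDescentAtLast (p+2) π
      then ((p:ℝ) + 2 - numCyclicDescents (p+2) π)
        * Nat.choose (k + p + 1 - numCyclicDescents (p+2) π) (p+1) / (((p:ℝ)+2) * (k:ℝ)^(p+2))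
      else (numCyclicDescents (p+2) π : ℝ)
        * Nat.choose (k + p + 1 - numCyclicDescents (p+2) π) (p+1) / (((p:ℝ)+2) * (k:ℝ)^(p+2)) := by
  have hd := nd_le (p+1) π
  unfold riffle cutRiffle numCyclicDescents
  set d := numDescents (p+2) π
  have hk0 : (0:ℝ) < k := by
    have : 0 < k := by omega
    exact_mod_cast this
  have hp0 : (0:ℝ) < (p:ℝ) + 2 := by positivity
  have hdR : (d:ℝ) ≤ p + 1 := by exact_mod_cast hd
  have e0 : p + 2 - 1 = p + 1 := rfl
  rw [e0]
  split_ifs with hc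
  · obtain ⟨a, ha⟩ : ∃ a, k + p - d = a := ⟨_, rfl⟩
    have e1 : p + 2 + k - d - 1 = a + 1 := by omega
    have e2 : p + 2 + k - (d + 1) - 1 = a := by omega
    have e3 : k + p + 1 - (d + 1) = a := by omega
    have haR : (a:ℝ) = k + p - d := by
      rw [← ha, Nat.cast_sub (by omega)]; push_cast; ring
    rw [e1, e2, e3]
    have h := Nat.add_one_mul_choose_eq a (p+1)
    have h := congrArg (Nat.cast : ℕ → ℝ) h
    push_cast at h
    have h' : ((a+1).choose (p+2) : ℝ) = (a+1) * a.choose (p+1) / (p+2) := by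
      rw [eq_div_iff hp0.ne']
      linear_combination -h
    rw [h', ← abs_of_nonneg (a := ((p:ℝ) + 2 - ((d + 1 : ℕ):ℝ)) * (a.choose (p+1))
      / (((p:ℝ)+2) * (k:ℝ)^(p+2)))]
    · congr 1
      push_cast
      rw [haR]
      field_simp
      ring
    · push_cast
      have : (0:ℝ) ≤ (p:ℝ) + 2 - (d + 1) := by linarith
      positivity
  · obtain ⟨a, ha⟩ : ∃ a, k + p + 1 - d = a := ⟨_, rfl⟩
    have e1 : p + 2 + k - d - 1 = a := by omega
    have e2 : p + 2 + k - (d + 0) - 1 = a := by omega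
    have e3 : k + p + 1 - (d + 0) = a := by omega
    have haR : (a:ℝ) = k + p + 1 - d := by
      rw [← ha, Nat.cast_sub (by omega)]; push_cast; ring
    rw [e1, e2, e3]
    have h := choose_rel a p
    have h' : (a.choose (p+2) : ℝ) = (a - (p+1)) * a.choose (p+1) / (p+2) := by
      rw [eq_div_iff hp0.ne']
      linear_combination -h
    rw [h', abs_sub_comm, ← abs_of_nonneg (a := ((d + 0 : ℕ):ℝ) * (a.choose (p+1))
      / (((p:ℝ)+2) * (k:ℝ)^(p+2)))]
    · congr 1
      push_cast
      rw [haR]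
      field_simp
      ring
    · positivity

theorem tv_eq (p k : ℕ) (hk : p + 2 ≤ k) :
    (1/2) * ∑ π : Equiv.Perm (Fin (p+2)), |riffle k (p+2) π - cutRiffle k (p+2) π|
     = ((((p:ℝ)+2) * k - (k:ℝ)^2) * (k:ℝ)^(p+1)
        + ∑ j ∈ Finset.range k, (2 * ((p:ℝ)+2) * j - ((p:ℝ)+2) * ((p:ℝ)+1) * ((k:ℝ) - j))
          * (j:ℝ)^(p+1)) / (((p:ℝ)+2) * (k:ℝ)^(p+2)) := by
  rw [Finset.sum_congr rfl fun π _ => abs_diff p k hk π]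
  rw [key_sum p (fun c => ((p:ℝ) + 2 - c) * Nat.choose (k + p + 1 - c) (p+1)
      / (((p:ℝ)+2) * (k:ℝ)^(p+2)))
    (fun c => (c:ℝ) * Nat.choose (k + p + 1 - c) (p+1) / (((p:ℝ)+2) * (k:ℝ)^(p+2)))]
  rw [← F_sum, Finset.mul_sum, Finset.sum_div]
  refine Finset.sum_congr rfl fun σ _ => ?_
  have : k + p + 1 - (numDescents (p+1) σ + 1) = k + p - numDescents (p+1) σ := by omega
  rw [this]
  push_cast
  ring

theorem faul (k p : ℕ) : (∑ j ∈ Finset.range k, (j:ℝ)^p)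
    = ∑ i ∈ Finset.range (p+1), (bernoulli i : ℝ) * ((p+1).choose i) * (k:ℝ)^(p+1-i) / (p+1) := by
  have := congrArg (Rat.cast : ℚ → ℝ) (sum_range_pow k p)
  push_cast at this
  exact this

theorem tv_bern (p k : ℕ) (hk : p + 2 ≤ k) :
    (1/2) * ∑ π : Equiv.Perm (Fin (p+2)), |riffle k (p+2) π - cutRiffle k (p+2) π|
     = 1 - k / ((p:ℝ)+2) + ∑ i ∈ Finset.range (p+2), (bernoulli i : ℝ) *
        (((p+3).choose i : ℝ) - ((p:ℝ)+1) / ((p:ℝ)+2) * ((p+2).choose i : ℝ))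
          * (k:ℝ)^(p+3-i) / (k:ℝ)^(p+2)
       + ((p:ℝ)+3) * (bernoulli (p+2) : ℝ) / (k:ℝ)^(p+1) := by
  rw [tv_eq p k hk]
  have hk0 : (0:ℝ) < k := by
    have : 0 < k := by omega
    exact_mod_cast this
  have hp0 : (0:ℝ) < (p:ℝ) + 2 := by positivity
  have hp3 : (0:ℝ) < (p:ℝ) + 3 := by positivity
  have e : ∑ j ∈ Finset.range k, (2 * ((p:ℝ)+2) * j - ((p:ℝ)+2) * ((p:ℝ)+1) * ((k:ℝ) - j))
          * (j:ℝ)^(p+1)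
      = ((p:ℝ)+2) * ((p:ℝ)+3) * ∑ j ∈ Finset.range k, (j:ℝ)^(p+2)
        - ((p:ℝ)+2) * ((p:ℝ)+1) * k * ∑ j ∈ Finset.range k, (j:ℝ)^(p+1) := by
    rw [Finset.mul_sum, Finset.mul_sum, ← Finset.sum_sub_distrib]
    refine Finset.sum_congr rfl fun j _ => ?_
    ring
  rw [e, faul, faul, Finset.sum_range_succ _ (p+2)]
  have e2 : p + 2 + 1 - (p + 2) = 1 := by omega
  have e3 : (p + 2 + 1).choose (p+2) = p + 3 := Nat.choose_succ_self_right (p+2)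
  rw [e2, e3, div_eq_iff (by positivity), add_mul (_ + _), add_mul (_ - _), Finset.sum_mul,
    mul_add (_ * _), Finset.mul_sum, Finset.mul_sum]
  have e4 : ∑ i ∈ Finset.range (p+2), (bernoulli i : ℝ) *
        (((p+3).choose i : ℝ) - ((p:ℝ)+1) / ((p:ℝ)+2) * ((p+2).choose i : ℝ))
          * (k:ℝ)^(p+3-i) / (k:ℝ)^(p+2) * (((p:ℝ)+2) * (k:ℝ)^(p+2))
      = ∑ i ∈ Finset.range (p+2), ((p:ℝ)+2) * ((p:ℝ)+3) *
         ((bernoulli i : ℝ) * ((p+2+1).choose i) * (k:ℝ)^(p+2+1-i) / ((p+2 : ℕ) + 1))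
       - ∑ i ∈ Finset.range (p+1+1), ((p:ℝ)+2) * ((p:ℝ)+1) * k *
         ((bernoulli i : ℝ) * ((p+1+1).choose i) * (k:ℝ)^(p+1+1-i) / ((p+1 : ℕ) + 1)) := by
    rw [← Finset.sum_sub_distrib]
    refine Finset.sum_congr rfl fun i hi => ?_
    rw [Finset.mem_range] at hi
    have : p + 3 - i = p + 2 - i + 1 := by omega
    have h3 : p + 2 + 1 = p + 3 := rfl
    have h2 : p + 1 + 1 = p + 2 := rfl
    rw [h3, h2, this, pow_succ]
    push_cast
    have g1 : (p:ℝ) + 2 + 1 = p + 3 := by ring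
    have g2 : (p:ℝ) + 1 + 1 = p + 2 := by ring
    rw [g1, g2]
    field_simp
  rw [e4]
  push_cast
  have g1 : (p:ℝ) + 2 + 1 = p + 3 := by ring
  rw [g1]
  field_simp
  ring

theorem bern_bound (t : ℕ) :
    |(bernoulli (2*(t+1)) : ℝ)| / ((2*(t+1)).factorial : ℝ) ≤ 1 / (12 * 39^t) := by
  have hZ := hasSum_zeta_nat (k := t+1) (by omega)
  have h2 := hasSum_zeta_two
  have hle := hasSum_le (f := fun n : ℕ => 1 / (n : ℝ) ^ (2 * (t+1)))
    (g := fun n : ℕ => (1:ℝ) / (n : ℝ) ^ 2) (fun n => by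
      rcases Nat.eq_zero_or_pos n with h | h
      · subst h; simp
      · have h1 : (1:ℝ) ≤ n := by exact_mod_cast h
        apply one_div_le_one_div_of_le (by positivity)
        exact pow_le_pow_right₀ h1 (by omega)) hZ h2
  have hnn := HasSum.nonneg (fun n : ℕ => (by positivity : (0:ℝ) ≤ 1 / (n : ℝ) ^ (2 * (t+1)))) hZ
  have habs := abs_of_nonneg hnn
  rw [← habs, abs_div, abs_mul, abs_mul, abs_mul, abs_pow, abs_neg, abs_one, one_pow, one_mul,
    abs_of_pos (show (0:ℝ) < 2 ^ (2*(t+1)-1) by positivity),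
    abs_of_pos (show (0:ℝ) < Real.pi ^ (2*(t+1)) by positivity),
    abs_of_pos (show (0:ℝ) < ((2*(t+1)).factorial : ℝ) by positivity), mul_div_assoc] at hle
  set b := |(bernoulli (2*(t+1)) : ℝ)| / ((2*(t+1)).factorial : ℝ)
  have hb : 0 ≤ b := by positivity
  have e1 : (2:ℝ) ^ (2*(t+1)-1) = 2 * 4^t := by
    rw [show 2*(t+1)-1 = 2*t+1 by omega, pow_succ, pow_mul]; norm_num; ring
  have e2 : Real.pi ^ (2*(t+1)) = (Real.pi^2)^t * Real.pi^2 := by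
    rw [pow_mul, pow_succ]
  rw [e1, e2] at hle
  have hpi : (39:ℝ) ≤ 4 * Real.pi^2 := by
    have := Real.pi_gt_d2
    nlinarith
  have hpow : (39:ℝ)^t ≤ 4^t * (Real.pi^2)^t := by
    rw [← mul_pow]; exact pow_le_pow_left₀ (by norm_num) hpi t
  have hp2 : 0 < Real.pi^2 := by positivity
  have h3 : 12 * (4^t * (Real.pi^2)^t) * b ≤ 1 := by
    have : (12 * (4^t * (Real.pi^2)^t) * b) * Real.pi^2 ≤ 1 * Real.pi^2 := by
      linarith
    exact le_of_mul_le_mul_right this hp2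
  rw [le_div_iff₀ (by positivity)]
  nlinarith [mul_le_mul_of_nonneg_right hpow hb]

noncomputable def beta (i : ℕ) : ℝ := |(bernoulli i : ℝ)| / (i.factorial : ℝ) * (i + 1)

theorem num_ineq (t : ℕ) : (2*(t:ℝ)+7) * 4^(t+1) ≤ 0.036 * 39^(t+2) := by
  induction t with
  | zero => norm_num
  | succ t ih =>
    rw [pow_succ, pow_succ (39:ℝ)]
    push_cast
    have : (0:ℝ) < 4^(t+1) := by positivity
    have ht : (0:ℝ) ≤ t := by positivity
    nlinarith [mul_nonneg ht this.le]

theorem beta_le (x : ℕ) : beta (x+5) ≤ 0.003 * (1/2)^(x+1) := by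
  unfold beta
  rcases Nat.even_or_odd (x+5) with h | h
  · obtain ⟨m, hm⟩ := h
    obtain ⟨t, rfl⟩ : ∃ t, m = t + 3 := ⟨m - 3, by omega⟩
    have e : x + 5 = 2 * ((t+2) + 1) := by omega
    have hx : x + 1 = 2 * (t + 1) := by omega
    have hb := bern_bound (t+2)
    have hn := num_ineq t
    rw [e, hx, pow_mul]
    push_cast
    have e1 : (2 * ((t:ℝ) + 2 + 1) + 1) = 2 * t + 7 := by ring
    rw [e1]
    refine (mul_le_mul_of_nonneg_right hb (by positivity)).trans ?_
    have : ((1:ℝ)/2)^2 = 1/4 := by norm_num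
    rw [this, div_pow, one_pow, div_mul_eq_mul_div, mul_one_div, one_mul]
    rw [div_le_div_iff₀ (by positivity) (by positivity)]
    linarith
  · rw [bernoulli_eq_zero_of_odd h (by omega)]
    simp
    positivity

theorem beta_tail (q : ℕ) : ∑ x ∈ Finset.range q, beta (x+5) ≤ 0.003 - 0.003 * (1/2)^q := by
  induction q with
  | zero => simp
  | succ q ih =>
    rw [Finset.sum_range_succ]
    have := beta_le q
    rw [pow_succ] at *
    linarith

theorem beta_nonneg (i : ℕ) : 0 ≤ beta i := by unfold beta; positivity

theorem beta_sum (q : ℕ) : ∑ x ∈ Finset.range q, beta (x+3) ≤ 0.01 := by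
  have h1 : ∑ x ∈ Finset.range q, beta (x+3) ≤ ∑ x ∈ Finset.range (q+2), beta (x+3) :=
    Finset.sum_le_sum_of_subset_of_nonneg (Finset.range_mono (by omega))
      (fun i _ _ => beta_nonneg _)
  rw [Finset.sum_range_succ', Finset.sum_range_succ'] at h1
  have h2 := beta_tail q
  have h3 : beta (0+3) = 0 := by
    unfold beta
    rw [bernoulli_eq_zero_of_odd (by decide) (by norm_num)]; simp
  have h4 : beta (0+1+3) = 5/720 := by
    unfold beta
    rw [bernoulli_eq_bernoulli'_of_ne_one (by norm_num), bernoulli'_four]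
    norm_num [Nat.factorial, abs_of_pos]
  have h5 : (0:ℝ) < (1/2)^q := by positivity
  rw [h3, h4] at h1
  have h6 : ∑ k ∈ Finset.range q, beta (k + 1 + 1 + 3) = ∑ x ∈ Finset.range q, beta (x+5) := rfl
  rw [h6] at h1
  norm_num at h1 h2 ⊢
  norm_num at h5
  have h7 : (0:ℝ) < (1/2)^q := by positivity
  linarith

theorem coef_eq (q x : ℕ) (hx : x < q) :
    (((q+4).choose (x+3) : ℝ) - ((q:ℝ)+2) / ((q:ℝ)+3) * ((q+3).choose (x+3) : ℝ))
      * ((x+3).factorial : ℝ)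
    = ((q+2).descFactorial (x+1) : ℝ) * ((q:ℝ) + 4 + (q+2) * (x+3)) := by
  have h1 : ((q+4).descFactorial (x+3)) = (q+4) * ((q+3) * (q+2).descFactorial (x+1)) := by
    rw [Nat.succ_descFactorial_succ, Nat.succ_descFactorial_succ]
  have h2 : ((q+3).descFactorial (x+3)) = (q+3) * ((q+2-(x+1)) * (q+2).descFactorial (x+1)) := by
    rw [Nat.succ_descFactorial_succ, Nat.descFactorial_succ]
  rw [Nat.descFactorial_eq_factorial_mul_choose] at h1 h2
  have h1 := congrArg (Nat.cast : ℕ → ℝ) h1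
  have h2 := congrArg (Nat.cast : ℕ → ℝ) h2
  push_cast at h1
  rw [Nat.cast_mul, Nat.cast_mul, Nat.cast_mul, Nat.cast_sub (show x + 1 ≤ q + 2 by omega)] at h2
  push_cast at h2
  have : (q:ℝ) + 3 ≠ 0 := by positivity
  field_simp
  linear_combination ((q:ℝ)+3) * h1 - ((q:ℝ)+2) * h2

theorem term_bound (q x k : ℕ) (hx : x < q) (hk : q + 3 ≤ k) :
    |(bernoulli (x+3) : ℝ) *
        (((q+4).choose (x+3) : ℝ) - ((q:ℝ)+2) / ((q:ℝ)+3) * ((q+3).choose (x+3) : ℝ))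
          * (k:ℝ)^(q+4-(x+3)) / (k:ℝ)^(q+3)| ≤ beta (x+3) * (((q:ℝ)+2) / k) := by
  have hk0 : (0:ℝ) < k := by
    have : 0 < k := by omega
    exact_mod_cast this
  have hkR : (q:ℝ) + 3 ≤ k := by exact_mod_cast hk
  have hc := coef_eq q x hx
  set e := (((q+4).choose (x+3) : ℝ) - ((q:ℝ)+2) / ((q:ℝ)+3) * ((q+3).choose (x+3) : ℝ))
  have hf : (0:ℝ) < ((x+3).factorial : ℝ) := by positivity
  have hD : ((q+2).descFactorial (x+1) : ℝ) ≤ (q+2) * (k:ℝ)^x := by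
    rw [Nat.succ_descFactorial_succ]
    push_cast
    have : ((q+1).descFactorial x : ℝ) ≤ (k:ℝ)^x := by
      have h : (q+1).descFactorial x ≤ k^x :=
        (Nat.descFactorial_le_pow _ _).trans (Nat.pow_le_pow_left (by omega) _)
      exact_mod_cast h
    have h2 : (q:ℝ) + 1 + 1 = q + 2 := by ring
    rw [h2]
    exact mul_le_mul_of_nonneg_left this (by positivity)
  have hbr : ((q:ℝ) + 4 + (q+2) * (x+3)) ≤ (x+4) * k := by
    have : ((x:ℝ)+4) * (q+3) ≤ (x+4) * k := mul_le_mul_of_nonneg_left hkR (by positivity)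
    have hx0 : (0:ℝ) ≤ x := by positivity
    nlinarith
  have he : e * ((x+3).factorial : ℝ) ≤ (q+2) * (k:ℝ)^x * ((x+4) * k) := by
    rw [hc]
    exact mul_le_mul hD hbr (by positivity) (by positivity)
  have he0 : 0 ≤ e := by
    have : 0 ≤ e * ((x+3).factorial : ℝ) := by rw [hc]; positivity
    exact nonneg_of_mul_nonneg_left this hf
  rw [abs_div, abs_mul, abs_mul, abs_of_nonneg he0, abs_of_pos (pow_pos hk0 _),
    abs_of_pos (pow_pos hk0 _)]
  have hpw : (k:ℝ)^(q+3) = (k:ℝ)^(q+4-(x+3)) * (k:ℝ)^x * k * k := by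
    rw [← pow_add, ← pow_succ, ← pow_succ]; congr 1; omega
  rw [hpw]
  unfold beta
  set B := |(bernoulli (x+3) : ℝ)|
  have hB : 0 ≤ B := abs_nonneg _
  set y := (k:ℝ)^(q+4-(x+3))
  have hy : 0 < y := pow_pos hk0 _
  set z := (k:ℝ)^x
  have hz : 0 < z := pow_pos hk0 _
  have e1 : B * e * y / (y * z * k * k)
     = B / ((x+3).factorial : ℝ) * ((e * ((x+3).factorial : ℝ)) / (z * k * k)) := by
    field_simp
  have e2 : B / ((x+3).factorial : ℝ) * (((x+3:ℕ):ℝ) + 1) * (((q:ℝ)+2) / k)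
     = B / ((x+3).factorial : ℝ) * (((q+2) * z * ((x+4) * k)) / (z * k * k)) := by
    push_cast
    field_simp
    ring
  rw [e1, e2]
  refine mul_le_mul_of_nonneg_left ?_ (by positivity)
  exact div_le_div_of_nonneg_right he (by positivity)

theorem main_aux (q k : ℕ) (hk : q + 3 ≤ k) :
    (0.24 : ℝ) * ((q:ℝ) + 2) / k ≤ 1 - k / ((q:ℝ)+3) + ∑ i ∈ Finset.range (q+3), (bernoulli i : ℝ) *
        (((q+4).choose i : ℝ) - ((q:ℝ)+2) / ((q:ℝ)+3) * ((q+3).choose i : ℝ))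
          * (k:ℝ)^(q+4-i) / (k:ℝ)^(q+3) := by
  have hk0 : (0:ℝ) < k := by
    have : 0 < k := by omega
    exact_mod_cast this
  rw [Finset.sum_range_succ', Finset.sum_range_succ', Finset.sum_range_succ']
  have hT : |∑ x ∈ Finset.range q, (bernoulli (x+1+1+1) : ℝ) *
        (((q+4).choose (x+1+1+1) : ℝ) - ((q:ℝ)+2) / ((q:ℝ)+3) * ((q+3).choose (x+1+1+1) : ℝ))
          * (k:ℝ)^(q+4-(x+1+1+1)) / (k:ℝ)^(q+3)| ≤ 0.01 * (((q:ℝ)+2) / k) := by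
    refine (Finset.abs_sum_le_sum_abs _ _).trans ?_
    refine (Finset.sum_le_sum fun x hx => term_bound q x k (Finset.mem_range.mp hx) hk).trans ?_
    rw [← Finset.sum_mul]
    exact mul_le_mul_of_nonneg_right (beta_sum q) (by positivity)
  have hT' := (abs_le.mp hT).1
  set T := ∑ x ∈ Finset.range q, (bernoulli (x+1+1+1) : ℝ) *
        (((q+4).choose (x+1+1+1) : ℝ) - ((q:ℝ)+2) / ((q:ℝ)+3) * ((q+3).choose (x+1+1+1) : ℝ))
          * (k:ℝ)^(q+4-(x+1+1+1)) / (k:ℝ)^(q+3)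
  have c2 : ∀ m : ℕ, ((m.choose 2 : ℕ) : ℝ) = m * (m - 1) / 2 := fun m => Nat.cast_choose_two ℝ m
  have f0 : (bernoulli 0 : ℝ) *
        (((q+4).choose 0 : ℝ) - ((q:ℝ)+2) / ((q:ℝ)+3) * ((q+3).choose 0 : ℝ))
          * (k:ℝ)^(q+4-0) / (k:ℝ)^(q+3) = k / ((q:ℝ)+3) := by
    rw [show q + 4 - 0 = q + 3 + 1 by omega, pow_succ]
    simp
    field_simp
    ring
  have f1 : (bernoulli (0+1) : ℝ) *
        (((q+4).choose (0+1) : ℝ) - ((q:ℝ)+2) / ((q:ℝ)+3) * ((q+3).choose (0+1) : ℝ))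
          * (k:ℝ)^(q+4-(0+1)) / (k:ℝ)^(q+3) = -1 := by
    rw [show q + 4 - (0+1) = q + 3 by omega]
    simp
    field_simp
    ring
  have f2 : (bernoulli (0+1+1) : ℝ) *
        (((q+4).choose (0+1+1) : ℝ) - ((q:ℝ)+2) / ((q:ℝ)+3) * ((q+3).choose (0+1+1) : ℝ))
          * (k:ℝ)^(q+4-(0+1+1)) / (k:ℝ)^(q+3) = (3 * (q:ℝ) + 8) / 12 / k := by
    rw [show q + 4 - (0+1+1) = q + 2 by omega, show (0+1+1) = 2 from rfl, c2, c2,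
      pow_succ (k:ℝ) (q+2)]
    rw [bernoulli_two]
    push_cast
    field_simp
    ring
  rw [f0, f1, f2]
  have g : (0.24 : ℝ) * ((q:ℝ) + 2) / k + 0.01 * (((q:ℝ)+2) / k) ≤ (3 * (q:ℝ) + 8) / 12 / k := by
    rw [mul_div_assoc', ← add_div]
    apply div_le_div_of_nonneg_right _ hk0.le
    norm_num
    linarith
  linarith
/-- for `n ≥ 3` and `k ≥ n`,
`||R_{k,n} - C_{k,n}|| ≥ 0.24·(n-1)/k + (n+1)·B_n/k^(n-1)`. -/
theorem totalVariation_riffle_cutRiffle_ge (n k : ℕ) (hn : 3 ≤ n) (hk : n ≤ k) :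
    (0.24 : ℝ) * ((n : ℝ) - 1) / (k : ℝ)
        + ((n : ℝ) + 1) * (bernoulli n : ℝ) / (k : ℝ) ^ (n - 1)
      ≤ (1 / 2) * ∑ π : Equiv.Perm (Fin n), |riffle k n π - cutRiffle k n π| := by
  obtain ⟨q, rfl⟩ : ∃ q, n = q + 3 := ⟨n - 3, by omega⟩
  have h1 := main_aux q k hk
  have h2 := tv_bern (q+1) k hk
  have e1 : (((q+1 : ℕ) : ℝ) + 1) = q + 2 := by push_cast; ring
  have e2 : (((q+1 : ℕ) : ℝ) + 2) = q + 3 := by push_cast; ring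
  have e3 : (((q+1 : ℕ) : ℝ) + 3) = q + 4 := by push_cast; ring
  rw [e1, e2, e3] at h2
  have e4 : (((q+3 : ℕ) : ℝ) - 1) = q + 2 := by push_cast; ring
  have e5 : (((q+3 : ℕ) : ℝ) + 1) = q + 4 := by push_cast; ring
  rw [e4, e5]
  refine le_of_le_of_eq ?_ h2.symm
  exact add_le_add h1 le_rfl
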